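/- Let A and B be two persistence barcodes, each having the same number m_∞ ≥ 1 of infinite intervals (intervals of the form [x, ∞)) and finitely many finite intervals. Fix C ≥ 0 and let τ replace each infinite interval [x, ∞) of a barcode by [x, u + C], where u is the maximum endpoint of the finite intervals of that barcode. Then for every 1 ≤ p < ∞, d_p(τ(A), τ(B)) ≤ ( d_p(A,B)^p + m_∞ · d_∞(A,B)^p )^{1/p}. -/

import Mathlib

open Finset

/-- A finite persistence barcode with `n` intervals is given by endpoint functions
`x y : Fin n → ℝ` with `x i ≤ y i` (zero-length intervals serve as padding).
`pcost` is the cost of matching interval `i` of `(xa, ya)` with interval `γ i` of `(xb, yb)`. -/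
noncomputable def pcost {n : ℕ} (xa ya xb yb : Fin n → ℝ) (γ : Equiv.Perm (Fin n)) (i : Fin n) : ℝ :=
  max |xa i - xb (γ i)| |ya i - yb (γ i)|

/-- `p`-th Wasserstein distance between barcodes with `n` intervals each:
`d_p(A,B) = min_γ (Σ_i max{|x_i^a − x_{γ(i)}^b|, |y_i^a − y_{γ(i)}^b|}^p)^(1/p)`. -/
noncomputable def dW {n : ℕ} (p : ℝ) (xa ya xb yb : Fin n → ℝ) : ℝ :=
  (Finset.univ : Finset (Equiv.Perm (Fin n))).inf' Finset.univ_nonempty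
    (fun γ => (∑ i, (pcost xa ya xb yb γ i) ^ p) ^ (1 / p))

/-- Bottleneck distance `d_∞(A,B) = min_γ max_i max{|x_i^a − x_{γ(i)}^b|, |y_i^a − y_{γ(i)}^b|}`. -/
noncomputable def dInf {n : ℕ} (xa ya xb yb : Fin n → ℝ) : ℝ :=
  (Finset.univ : Finset (Equiv.Perm (Fin n))).inf' Finset.univ_nonempty
    (fun γ => ⨆ i, pcost xa ya xb yb γ i)

/-- A barcode possibly containing infinite intervals is modelled by endpoints
`x y : Fin n → ℝ` together with a set `I` of indices of infinite intervals `[x_i, ∞)`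
(the value `y i` is irrelevant for `i ∈ I`).  By the convention `|∞ − ∞| = 0`, the
bijections achieving a finite distance are exactly those matching infinite intervals
with infinite intervals; `icost` is the resulting matching cost. -/
noncomputable def icost {n : ℕ} (xa ya xb yb : Fin n → ℝ) (Ia : Finset (Fin n))
    (γ : Equiv.Perm (Fin n)) (i : Fin n) : ℝ :=
  max |xa i - xb (γ i)| (if i ∈ Ia then 0 else |ya i - yb (γ i)|)

/-- `p`-th Wasserstein distance (`1 ≤ p < ∞`) between barcodes with infinite intervals:
the minimum is taken over bijections matching infinite intervals with infinite ones. -/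
noncomputable def dWi {n : ℕ} (p : ℝ) (xa ya xb yb : Fin n → ℝ)
    (Ia Ib : Finset (Fin n)) : ℝ :=
  sInf { r : ℝ | ∃ γ : Equiv.Perm (Fin n), (∀ i, i ∈ Ia ↔ γ i ∈ Ib) ∧
    r = (∑ i, (icost xa ya xb yb Ia γ i) ^ p) ^ (1 / p) }

/-- Bottleneck distance between barcodes with infinite intervals. -/
noncomputable def dInfi {n : ℕ} (xa ya xb yb : Fin n → ℝ) (Ia Ib : Finset (Fin n)) : ℝ :=
  sInf { r : ℝ | ∃ γ : Equiv.Perm (Fin n), (∀ i, i ∈ Ia ↔ γ i ∈ Ib) ∧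
    r = ⨆ i, icost xa ya xb yb Ia γ i }

/-- `u`, the maximum right endpoint of the finite intervals of the barcode. -/
noncomputable def uMax {n : ℕ} (y : Fin n → ℝ) (I : Finset (Fin n)) : ℝ :=
  sSup { r : ℝ | ∃ i, i ∉ I ∧ r = y i }

/-!
A bottleneck-optimal matching moves each right endpoint of a finite interval by at most `d_∞(A,B)`,
so the maximal finite endpoints `u_A`, `u_B` satisfy `|u_A − u_B| ≤ d_∞(A,B)`. Now use a
Wasserstein-optimal matching of `A` with `B` to match `τ(A)` with `τ(B)`: it costs the same on the
finite intervals, while each of the `m_∞` infinite ones costs `max(a, |u_A − u_B|)` instead of `a`,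
which adds at most `|u_A − u_B|^p` to the `p`-th power of the cost.
-/

theorem exists_sInf_eq_apply {α β : Type*} [Finite α] [ConditionallyCompleteLinearOrder β]
    {P : α → Prop} (hP : ∃ a, P a) (f : α → β) :
    ∃ a, P a ∧ sInf {r | ∃ a, P a ∧ r = f a} = f a := by
  have hfinite : {r | ∃ a, P a ∧ r = f a}.Finite :=
    (Set.finite_range f).subset fun _ ⟨a, _, ha⟩ => ⟨a, ha.symm⟩
  have hnonempty : {r | ∃ a, P a ∧ r = f a}.Nonempty := hP.imp' f fun a ha => ⟨a, ha, rfl⟩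
  exact hnonempty.csInf_mem hfinite

theorem exists_perm_forall_mem_iff {α : Type*} [Finite α] {s t : Finset α} (h : #s = #t) :
    ∃ γ : Equiv.Perm α, ∀ i, i ∈ s ↔ γ i ∈ t := by
  classical
  let e : {i // i ∈ s} ≃ {i // i ∈ t} := Finset.equivOfCardEq h
  exact ⟨e.extendSubtype, fun i =>
    ⟨e.extendSubtype_mem i, not_imp_not.1 (e.extendSubtype_not_mem i)⟩⟩

theorem max_rpow_le_add_rpow {a b : ℝ} (ha : 0 ≤ a) (hb : 0 ≤ b) (p : ℝ) :
    max a b ^ p ≤ a ^ p + b ^ p := by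
  have hap := Real.rpow_nonneg ha p
  have hbp := Real.rpow_nonneg hb p
  rcases max_choice a b with h | h <;> rw [h] <;> linarith

/-- The matchings of two barcodes along which all costs are finite: `γ` pairs the infinite
intervals (indexed by `Ia` and `Ib`) with each other. -/
def MatchesInfinite {n : ℕ} (Ia Ib : Finset (Fin n)) (γ : Equiv.Perm (Fin n)) : Prop :=
  ∀ i, i ∈ Ia ↔ γ i ∈ Ib

/-- The right endpoints of a barcode once every infinite interval `[x, ∞)`, indexed by `I`, is
replaced by `[x, t]`; the projection `τ` is the case `t = u + C`. -/
def capInfinite {n : ℕ} (y : Fin n → ℝ) (I : Finset (Fin n)) (t : ℝ) : Fin n → ℝ :=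
  fun i => if i ∈ I then t else y i

variable {n : ℕ} {xa ya xb yb : Fin n → ℝ} {Ia Ib : Finset (Fin n)} {γ : Equiv.Perm (Fin n)}

theorem MatchesInfinite.symm (hγ : MatchesInfinite Ia Ib γ) : MatchesInfinite Ib Ia γ.symm :=
  fun j => by rw [hγ, γ.apply_symm_apply]

theorem MatchesInfinite.apply_notMem (hγ : MatchesInfinite Ia Ib γ) {i : Fin n} (hi : i ∉ Ia) :
    γ i ∉ Ib :=
  mt (hγ i).2 hi

section Cost

theorem pcost_nonneg (i : Fin n) : 0 ≤ pcost xa ya xb yb γ i :=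
  le_max_of_le_left (abs_nonneg _)

theorem icost_nonneg (i : Fin n) : 0 ≤ icost xa ya xb yb Ia γ i :=
  le_max_of_le_left (abs_nonneg _)

theorem abs_sub_le_icost {i : Fin n} (hi : i ∉ Ia) :
    |ya i - yb (γ i)| ≤ icost xa ya xb yb Ia γ i := by
  rw [icost, if_neg hi]
  exact le_max_right _ _

theorem pcost_capInfinite_rpow_le (hγ : MatchesInfinite Ia Ib γ) (p s t : ℝ) (i : Fin n) :
    pcost xa (capInfinite ya Ia s) xb (capInfinite yb Ib t) γ i ^ p ≤
      icost xa ya xb yb Ia γ i ^ p + if i ∈ Ia then |s - t| ^ p else 0 := by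
  by_cases hi : i ∈ Ia
  · have hγi : γ i ∈ Ib := (hγ i).1 hi
    simpa [pcost, icost, capInfinite, hi, hγi] using
      max_rpow_le_add_rpow (abs_nonneg (xa i - xb (γ i))) (abs_nonneg (s - t)) p
  · simp [pcost, icost, capInfinite, hi, hγ.apply_notMem hi]

end Cost

section Distance

theorem dW_le_of_perm (p : ℝ) (γ : Equiv.Perm (Fin n)) :
    dW p xa ya xb yb ≤ (∑ i, pcost xa ya xb yb γ i ^ p) ^ (1 / p) :=
  Finset.inf'_le _ (Finset.mem_univ γ)

theorem dWi_nonneg (p : ℝ) : 0 ≤ dWi p xa ya xb yb Ia Ib := by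
  refine Real.sInf_nonneg ?_
  rintro _ ⟨γ, -, rfl⟩
  exact Real.rpow_nonneg (Finset.sum_nonneg fun i _ => Real.rpow_nonneg (icost_nonneg i) p) _

variable (xa ya xb yb)

theorem exists_dWi_rpow_eq {p : ℝ} (hp : p ≠ 0) (hcard : #Ia = #Ib) :
    ∃ γ, MatchesInfinite Ia Ib γ ∧
      dWi p xa ya xb yb Ia Ib ^ p = ∑ i, icost xa ya xb yb Ia γ i ^ p := by
  obtain ⟨γ, hγ, hdist⟩ := exists_sInf_eq_apply (exists_perm_forall_mem_iff hcard)
    fun γ => (∑ i, icost xa ya xb yb Ia γ i ^ p) ^ (1 / p)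
  have hsum : 0 ≤ ∑ i, icost xa ya xb yb Ia γ i ^ p :=
    Finset.sum_nonneg fun i _ => Real.rpow_nonneg (icost_nonneg i) p
  refine ⟨γ, hγ, ?_⟩
  rw [dWi, hdist, one_div, Real.rpow_inv_rpow hsum hp]

theorem exists_forall_icost_le_dInfi (hcard : #Ia = #Ib) :
    ∃ γ, MatchesInfinite Ia Ib γ ∧
      ∀ i, icost xa ya xb yb Ia γ i ≤ dInfi xa ya xb yb Ia Ib := by
  obtain ⟨γ, hγ, hdist⟩ := exists_sInf_eq_apply (exists_perm_forall_mem_iff hcard)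
    fun γ => ⨆ i, icost xa ya xb yb Ia γ i
  exact ⟨γ, hγ, fun i => (le_ciSup (Set.finite_range _).bddAbove i).trans_eq hdist.symm⟩

theorem dW_capInfinite_le {p : ℝ} (hp : 0 < p) (hcard : #Ia = #Ib) (s t : ℝ) :
    dW p xa (capInfinite ya Ia s) xb (capInfinite yb Ib t) ≤
      (dWi p xa ya xb yb Ia Ib ^ p + #Ia * |s - t| ^ p) ^ (1 / p) := by
  obtain ⟨γ, hγ, hdist⟩ := exists_dWi_rpow_eq xa ya xb yb hp.ne' hcard
  have hsum : ∑ i, pcost xa (capInfinite ya Ia s) xb (capInfinite yb Ib t) γ i ^ p ≤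
      dWi p xa ya xb yb Ia Ib ^ p + #Ia * |s - t| ^ p :=
    calc _ ≤ ∑ i, (icost xa ya xb yb Ia γ i ^ p + if i ∈ Ia then |s - t| ^ p else 0) :=
          Finset.sum_le_sum fun i _ => pcost_capInfinite_rpow_le hγ p s t i
      _ = dWi p xa ya xb yb Ia Ib ^ p + #Ia * |s - t| ^ p := by
          simp [Finset.sum_add_distrib, hdist]
  have hnonneg : 0 ≤ ∑ i, pcost xa (capInfinite ya Ia s) xb (capInfinite yb Ib t) γ i ^ p :=
    Finset.sum_nonneg fun i _ => Real.rpow_nonneg (pcost_nonneg i) p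
  exact (dW_le_of_perm p γ).trans (Real.rpow_le_rpow hnonneg hsum (by positivity))

end Distance

section MaximalEndpoint

theorem le_uMax {y : Fin n → ℝ} {I : Finset (Fin n)} {i : Fin n} (hi : i ∉ I) :
    y i ≤ uMax y I := by
  have hbdd : BddAbove {r | ∃ i, i ∉ I ∧ r = y i} := by
    refine (Set.finite_range y).bddAbove.mono ?_
    rintro _ ⟨i, -, rfl⟩
    exact Set.mem_range_self i
  exact le_csSup hbdd ⟨i, hi, rfl⟩

theorem uMax_le {y : Fin n → ℝ} {I : Finset (Fin n)} {b : ℝ} (hfin : ∃ i, i ∉ I)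
    (hb : ∀ i ∉ I, y i ≤ b) : uMax y I ≤ b := by
  have hnonempty : {r | ∃ i, i ∉ I ∧ r = y i}.Nonempty := hfin.imp' y fun i hi => ⟨i, hi, rfl⟩
  exact csSup_le hnonempty fun _ ⟨i, hi, hr⟩ => hr.trans_le (hb i hi)

theorem MatchesInfinite.uMax_le_uMax_add (hγ : MatchesInfinite Ia Ib γ) (hfin : ∃ i, i ∉ Ia)
    {D : ℝ} (hD : ∀ i ∉ Ia, |ya i - yb (γ i)| ≤ D) : uMax ya Ia ≤ uMax yb Ib + D :=
  uMax_le hfin fun i hi => by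
    have hyb : yb (γ i) ≤ uMax yb Ib := le_uMax (hγ.apply_notMem hi)
    linarith [le_of_abs_le (hD i hi)]

theorem MatchesInfinite.abs_uMax_sub_uMax_le (hγ : MatchesInfinite Ia Ib γ)
    (hfin : ∃ i, i ∉ Ia) {D : ℝ} (hD : ∀ i ∉ Ia, |ya i - yb (γ i)| ≤ D) :
    |uMax ya Ia - uMax yb Ib| ≤ D := by
  have hfin_symm : ∃ j, j ∉ Ib := hfin.imp' γ fun _ => hγ.apply_notMem
  have hD_symm : ∀ j ∉ Ib, |yb j - ya (γ.symm j)| ≤ D := fun j hj => by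
    simpa [abs_sub_comm] using hD (γ.symm j) (hγ.symm.apply_notMem hj)
  rw [abs_sub_le_iff, sub_le_iff_le_add', sub_le_iff_le_add']
  exact ⟨hγ.uMax_le_uMax_add hfin hD, hγ.symm.uMax_le_uMax_add hfin_symm hD_symm⟩

theorem abs_uMax_sub_uMax_le_dInfi (hcard : #Ia = #Ib) (hfin : ∃ i, i ∉ Ia) :
    |uMax ya Ia - uMax yb Ib| ≤ dInfi xa ya xb yb Ia Ib := by
  obtain ⟨δ, hδ, hcost⟩ := exists_forall_icost_le_dInfi xa ya xb yb hcard
  exact hδ.abs_uMax_sub_uMax_le hfin fun i hi => (abs_sub_le_icost hi).trans (hcost i)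

end MaximalEndpoint

theorem projection_tau_inequality_general {p : ℝ} (hp : 0 < p) (C : ℝ)
    (hcard : #Ia = #Ib) (hfin : ∃ i, i ∉ Ia) :
    dW p xa (capInfinite ya Ia (uMax ya Ia + C)) xb (capInfinite yb Ib (uMax yb Ib + C)) ≤
      (dWi p xa ya xb yb Ia Ib ^ p + #Ia * dInfi xa ya xb yb Ia Ib ^ p) ^ (1 / p) := by
  have hdWi : 0 ≤ dWi p xa ya xb yb Ia Ib ^ p := Real.rpow_nonneg (dWi_nonneg p) p
  have hcap := dW_capInfinite_le xa ya xb yb hp hcard (uMax ya Ia + C) (uMax yb Ib + C)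
  rw [add_sub_add_right_eq_sub] at hcap
  refine hcap.trans ?_
  gcongr
  exact abs_uMax_sub_uMax_le_dInfi hcard hfin

/-- if `A`, `B` have the same number `m_∞ ≥ 1` of infinite intervals and the
projection `τ` replaces each infinite interval `[x,∞)` by `[x, u + C]` (with `u` the maximum
endpoint of the finite intervals of that barcode, `C ≥ 0`), then for `1 ≤ p < ∞`,
`d_p(τ(A), τ(B)) ≤ (d_p(A,B)^p + m_∞·d_∞(A,B)^p)^(1/p)`. -/
theorem projection_tau_inequality {n : ℕ} (p C : ℝ) (hp : 1 ≤ p) (hC : 0 ≤ C)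
    (xa ya xb yb : Fin n → ℝ) (Ia Ib : Finset (Fin n))
    (hcard : Ia.card = Ib.card) (hm : 1 ≤ Ia.card)
    (hfinA : ∃ i, i ∉ Ia) (hfinB : ∃ i, i ∉ Ib)
    (hA : ∀ i ∉ Ia, xa i ≤ ya i) (hB : ∀ i ∉ Ib, xb i ≤ yb i) :
    dW p xa (fun i => if i ∈ Ia then uMax ya Ia + C else ya i)
        xb (fun i => if i ∈ Ib then uMax yb Ib + C else yb i) ≤
      (dWi p xa ya xb yb Ia Ib ^ p + (Ia.card : ℝ) * dInfi xa ya xb yb Ia Ib ^ p) ^ (1 / p) := by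
  exact projection_tau_inequality_general (zero_lt_one.trans_le hp) C hcard hfinA
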